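/- Let x : ℕ → ℝ^k be such that ∑ x_n is conditionally convergent and the achievement set A(x) is dense in ℝ^k, and let y : ℕ → ℝ^m be such that ∑ y_n is absolutely convergent. Then closure(A((x_n, y_n)_n)) = ℝ^k × A(y), where (x_n, y_n) denotes the sequence of pairs in ℝ^k × ℝ^m. -/

import Mathlib

open Filter Topology

/-- The achievement set of a sequence: all limits of partial sums of subseries. -/
def achv {X : Type*} [AddCommMonoid X] [TopologicalSpace X] (x : ℕ → X) : Set X :=
  {s | ∃ ε : ℕ → Bool,
    Tendsto (fun N => ∑ n ∈ Finset.range N, if ε n then x n else 0) atTop (𝓝 s)}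

section AchievementSet

/-- The vectors that are approximated by finite subsums of `x` with arbitrarily late indices. -/
def tailLimits {E : Type*} [NormedAddCommGroup E] (x : ℕ → E) : Set E :=
  {u | ∀ δ > 0, ∀ N : ℕ, ∃ G : Finset ℕ, (∀ n ∈ G, N ≤ n) ∧ ‖∑ n ∈ G, x n - u‖ < δ}

section NormedGroup

variable {E : Type*} [NormedAddCommGroup E] {x : ℕ → E}

theorem zero_mem_tailLimits : (0 : E) ∈ tailLimits x :=
  fun δ hδ _ => ⟨∅, by simp, by simpa using hδ⟩

/-- A finite subsum can be extended so as to move it approximately by a given element of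
`tailLimits`. -/
theorem exists_late_sum_near_add {v : E} (hv : v ∈ tailLimits x) {G : Finset ℕ} {N : ℕ}
    (hG : ∀ n ∈ G, N ≤ n) {δ : ℝ} (hδ : 0 < δ) :
    ∃ H : Finset ℕ, (∀ n ∈ H, N ≤ n) ∧ ‖∑ n ∈ H, x n - (∑ n ∈ G, x n + v)‖ < δ := by
  obtain ⟨H, hHN, hH⟩ := hv δ hδ (N + G.sup id + 1)
  have hdisj : Disjoint G H := by
    rw [Finset.disjoint_left]
    intro n hnG hnH
    have h₁ : n ≤ G.sup id := Finset.le_sup (f := id) hnG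
    have h₂ := hHN n hnH
    omega
  refine ⟨G ∪ H, ?_, ?_⟩
  · intro n hn
    rcases Finset.mem_union.1 hn with h | h
    · exact hG n h
    · have := hHN n h
      omega
  · rwa [Finset.sum_union hdisj, add_sub_add_left_eq_sub]

/-- If `P` moves vectors only along `tailLimits x`, then limits of images under `P` of late
subsums lie in `tailLimits x`. -/
theorem mem_tailLimits_of_tendsto {P : E → E} {u : E} {G : ℕ → Finset ℕ}
    (hP : ∀ v, P v - v ∈ tailLimits x) (hG : ∀ j, ∀ n ∈ G j, j ≤ n)
    (hu : Tendsto (fun j => P (∑ n ∈ G j, x n)) atTop (𝓝 u)) : u ∈ tailLimits x := by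
  intro δ hδ N
  obtain ⟨j, hj, hjN⟩ := ((Metric.tendsto_nhds.1 hu (δ / 2) (half_pos hδ)).and
    (eventually_ge_atTop N)).exists
  obtain ⟨H, hHN, hH⟩ := exists_late_sum_near_add (hP (∑ n ∈ G j, x n))
    (fun n hn => hjN.trans (hG j n hn)) (half_pos hδ)
  refine ⟨H, hHN, ?_⟩
  rw [add_sub_cancel] at hH
  rw [dist_eq_norm] at hj
  linarith [norm_sub_le_norm_sub_add_norm_sub (∑ n ∈ H, x n) (P (∑ n ∈ G j, x n)) u]

theorem add_mem_tailLimits {u v : E} (hu : u ∈ tailLimits x) (hv : v ∈ tailLimits x) :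
    u + v ∈ tailLimits x := by
  intro δ hδ N
  obtain ⟨G, hGN, hG⟩ := hu (δ / 2) (half_pos hδ) N
  obtain ⟨H, hHN, hH⟩ := exists_late_sum_near_add hv hGN (half_pos hδ)
  refine ⟨H, hHN, ?_⟩
  rw [← add_sub_add_right_eq_sub _ _ v] at hG
  linarith [norm_sub_le_norm_sub_add_norm_sub (∑ n ∈ H, x n) (∑ n ∈ G, x n + v) (u + v)]

theorem isClosed_tailLimits : IsClosed (tailLimits x) := by
  refine isClosed_of_closure_subset fun u hu δ hδ N => ?_
  obtain ⟨v, hv, huv⟩ := Metric.mem_closure_iff.1 hu (δ / 2) (half_pos hδ)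
  obtain ⟨G, hGN, hG⟩ := hv (δ / 2) (half_pos hδ) N
  refine ⟨G, hGN, ?_⟩
  rw [dist_comm, dist_eq_norm] at huv
  linarith [norm_sub_le_norm_sub_add_norm_sub (∑ n ∈ G, x n) v u]

theorem neg_mem_tailLimits (hx : CauchySeq fun N => ∑ n ∈ Finset.range N, x n) {u : E}
    (hu : u ∈ tailLimits x) : -u ∈ tailLimits x := by
  intro δ hδ N
  obtain ⟨K, hK⟩ := Metric.cauchySeq_iff'.1 hx (δ / 4) (by positivity)
  obtain ⟨G, hGN, hG⟩ := hu (δ / 4) (by positivity) (N + K)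
  set M := N + K + G.sup id + 1 with hM
  have hsub : G ⊆ Finset.Ico (N + K) M := by
    intro n hn
    have h₁ : n ≤ G.sup id := Finset.le_sup (f := id) hn
    have h₂ := hGN n hn
    rw [Finset.mem_Ico]
    omega
  refine ⟨Finset.Ico (N + K) M \ G, ?_, ?_⟩
  · intro n hn
    have := (Finset.mem_Ico.1 (Finset.mem_sdiff.1 hn).1).1
    omega
  · have h₁ := hK (N + K) (by omega)
    have h₂ := hK M (by omega)
    rw [dist_eq_norm] at h₁ h₂
    have hsum := Finset.sum_sdiff (f := x) hsub
    rw [Finset.sum_Ico_eq_sub _ (by omega)] at hsum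
    have key : ∑ n ∈ Finset.Ico (N + K) M \ G, x n - -u =
        (∑ n ∈ Finset.range M, x n - ∑ n ∈ Finset.range K, x n)
        - (∑ n ∈ Finset.range (N + K), x n - ∑ n ∈ Finset.range K, x n)
        - (∑ n ∈ G, x n - u) := by
      rw [eq_sub_of_add_eq hsum]
      abel
    rw [key]
    refine (norm_sub_le _ _).trans_lt ?_
    linarith [norm_sub_le (∑ n ∈ Finset.range M, x n - ∑ n ∈ Finset.range K, x n)
      (∑ n ∈ Finset.range (N + K), x n - ∑ n ∈ Finset.range K, x n)]

/-- For a convergent series, `tailLimits` is a subgroup. -/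
def tailLimitsSubgroup (x : ℕ → E) (hx : CauchySeq fun N => ∑ n ∈ Finset.range N, x n) :
    AddSubgroup E where
  carrier := tailLimits x
  zero_mem' := zero_mem_tailLimits
  add_mem' := add_mem_tailLimits
  neg_mem' := neg_mem_tailLimits hx

end NormedGroup

/-- The largest linear subspace contained in a subgroup of a real vector space. -/
def AddSubgroup.linealitySpace {E : Type*} [AddCommGroup E] [Module ℝ E] (S : AddSubgroup E) :
    Submodule ℝ E where
  carrier := {v | ∀ t : ℝ, t • v ∈ S}
  zero_mem' := fun t => by simp
  add_mem' := fun hu hv t => by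
    rw [smul_add]
    exact S.add_mem (hu t) (hv t)
  smul_mem' := fun c v hv t => by
    rw [smul_smul]
    exact hv _

/-- A closed subgroup having arbitrarily short nonzero vectors in a subspace contains a line of
that subspace. -/
theorem AddSubgroup.exists_line_of_short_vectors {E : Type*} [NormedAddCommGroup E]
    [NormedSpace ℝ E] [FiniteDimensional ℝ E] (S : AddSubgroup E) (hS : IsClosed (S : Set E))
    (W : Submodule ℝ E) (h : ∀ r > 0, ∃ u ∈ S, u ∈ W ∧ u ≠ 0 ∧ ‖u‖ ≤ r) :
    ∃ w ∈ W, w ≠ 0 ∧ w ∈ S.linealitySpace := by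
  choose! u huS huW hu0 hur using h
  have hpos (j : ℕ) : (0 : ℝ) < 1 / ((j : ℝ) + 1) := by positivity
  set v : ℕ → E := fun j => u (1 / ((j : ℝ) + 1)) with hv
  have hv0 (j : ℕ) : 0 < ‖v j‖ := norm_pos_iff.2 (hu0 _ (hpos j))
  have hvlim : Tendsto (fun j => ‖v j‖) atTop (𝓝 0) :=
    squeeze_zero (fun _ => norm_nonneg _) (fun j => hur _ (hpos j))
      tendsto_one_div_add_atTop_nhds_zero_nat
  have : ProperSpace E := FiniteDimensional.proper ℝ E
  obtain ⟨w, hw, φ, hφ, hlim⟩ := (isCompact_sphere (0 : E) 1).tendsto_subseq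
    (x := fun j => ‖v j‖⁻¹ • v j) (fun j => by
      rw [mem_sphere_zero_iff_norm, norm_smul, norm_inv, norm_norm, inv_mul_cancel₀ (hv0 j).ne'])
  refine ⟨w, ?_, ?_, fun t => ?_⟩
  · exact W.closed_of_finiteDimensional.mem_of_tendsto hlim
      (Eventually.of_forall fun j => W.smul_mem _ (huW _ (hpos _)))
  · rintro rfl
    simp at hw
  · have hfloor (j : ℕ) : |(⌊t / ‖v j‖⌋ : ℝ) * ‖v j‖ - t| ≤ ‖v j‖ := by
      have h₁ := (le_div_iff₀ (hv0 j)).1 (Int.floor_le (t / ‖v j‖))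
      have h₂ := (div_lt_iff₀ (hv0 j)).1 (Int.lt_floor_add_one (t / ‖v j‖))
      rw [abs_le]
      constructor <;> linarith [hv0 j]
    have hcoef : Tendsto (fun j => (⌊t / ‖v j‖⌋ : ℝ) * ‖v j‖) atTop (𝓝 t) := by
      rw [tendsto_iff_dist_tendsto_zero]
      exact squeeze_zero (fun _ => dist_nonneg) hfloor hvlim
    refine hS.mem_of_tendsto ((hcoef.comp hφ.tendsto_atTop).smul hlim)
      (Eventually.of_forall fun j => ?_)
    have : ((⌊t / ‖v (φ j)‖⌋ : ℝ) * ‖v (φ j)‖) • (‖v (φ j)‖⁻¹ • v (φ j)) =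
        ⌊t / ‖v (φ j)‖⌋ • v (φ j) := by
      rw [smul_smul, mul_assoc, mul_inv_cancel₀ (hv0 _).ne', mul_one, Int.cast_smul_eq_zsmul]
    simp only [Function.comp_apply, this]
    exact S.zsmul_mem (huS _ (hpos _)) _

/-- For a null sequence with dense achievement set, the images of late subsums under a nonzero
linear contraction attain every positive size up to a factor of two. -/
theorem exists_late_sum_norm_mem_Icc {E : Type*} [NormedAddCommGroup E]
    [NormedSpace ℝ E] {x : ℕ → E} (hx0 : Tendsto x atTop (𝓝 0)) (hd : Dense (achv x))
    (P : E →L[ℝ] E) (hP : ∀ v, ‖P v‖ ≤ ‖v‖) {e : E} (he : P e ≠ 0) {r : ℝ} (hr : 0 < r) (N : ℕ) :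
    ∃ G : Finset ℕ, (∀ n ∈ G, N ≤ n) ∧ ‖P (∑ n ∈ G, x n)‖ ∈ Set.Icc r (2 * r) := by
  obtain ⟨K, hK⟩ := Metric.tendsto_atTop.1 hx0 r hr
  set L := N + K with hL
  set R := r + ∑ n ∈ Finset.range L, ‖x n‖ with hR
  obtain ⟨a, ha, ε, hε⟩ : ∃ a, R < ‖P a‖ ∧ a ∈ achv x := by
    have hopen : IsOpen {a | R < ‖P a‖} := isOpen_lt continuous_const P.continuous.norm
    refine hd.inter_open_nonempty _ hopen ⟨((R + 1) / ‖P e‖) • e, ?_⟩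
    have hR0 : 0 ≤ R := by positivity
    have hPe : 0 < ‖P e‖ := norm_pos_iff.2 he
    change R < ‖P (((R + 1) / ‖P e‖) • e)‖
    rw [map_smul, norm_smul, Real.norm_of_nonneg (by positivity),
      div_mul_cancel₀ _ hPe.ne']
    linarith
  set z : ℕ → E := fun n => if ε n then x n else 0 with hz
  have hzx (n : ℕ) : ‖z n‖ ≤ ‖x n‖ := by
    by_cases h : ε n <;> simp [hz, h]
  have hPε := ((P.continuous.tendsto a).comp hε).norm
  obtain ⟨M, hM, hML⟩ := ((hPε.eventually_const_lt ha).and (eventually_ge_atTop L)).exists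
  have hlarge : ∃ j, r ≤ ‖P (∑ n ∈ Finset.Ico L (L + j), z n)‖ := by
    refine ⟨M - L, ?_⟩
    rw [Nat.add_sub_cancel' hML]
    have hsplit := Finset.sum_range_add_sum_Ico z hML
    have h₁ : ‖P (∑ n ∈ Finset.range M, z n)‖ ≤
        ‖P (∑ n ∈ Finset.range L, z n)‖ + ‖P (∑ n ∈ Finset.Ico L M, z n)‖ := by
      rw [← hsplit, map_add]
      exact norm_add_le _ _
    have h₂ : ‖P (∑ n ∈ Finset.range L, z n)‖ ≤ ∑ n ∈ Finset.range L, ‖x n‖ :=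
      (hP _).trans (norm_sum_le_of_le _ fun n _ => hzx n)
    have h₃ : R < ‖P (∑ n ∈ Finset.range M, z n)‖ := hM
    linarith
  classical
  refine ⟨(Finset.Ico L (L + Nat.find hlarge)).filter (fun n => ε n), ?_, ?_, ?_⟩
  · intro n hn
    have := (Finset.mem_Ico.1 (Finset.mem_filter.1 hn).1).1
    omega
  · rw [Finset.sum_filter]
    exact Nat.find_spec hlarge
  · rw [Finset.sum_filter]
    rcases hj : Nat.find hlarge with _ | j
    · simp only [add_zero, Finset.Ico_self, Finset.sum_empty, map_zero, norm_zero]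
      positivity
    · have hmin := not_le.1 (Nat.find_min hlarge (m := j) (by omega))
      have hstep : ‖P (z (L + j))‖ < r := by
        refine (hP _).trans_lt ((hzx _).trans_lt ?_)
        simpa using hK (L + j) (by omega)
      change ‖P (∑ n ∈ Finset.Ico L (L + j + 1), z n)‖ ≤ 2 * r
      rw [Finset.sum_Ico_succ_top (by omega), map_add]
      linarith [norm_add_le (P (∑ n ∈ Finset.Ico L (L + j), z n)) (P (z (L + j)))]

theorem tailLimits_eq_univ {E : Type*} [NormedAddCommGroup E] [InnerProductSpace ℝ E]
    [FiniteDimensional ℝ E] {x : ℕ → E} (hx : CauchySeq fun N => ∑ n ∈ Finset.range N, x n)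
    (hd : Dense (achv x)) : tailLimits x = Set.univ := by
  set S := tailLimitsSubgroup x hx with hS
  have hSc : IsClosed (S : Set E) := isClosed_tailLimits
  have hx0 : Tendsto x atTop (𝓝 0) := by
    obtain ⟨s, hs⟩ := cauchySeq_tendsto_of_complete hx
    have h := (hs.comp (tendsto_add_atTop_nat 1)).sub hs
    simpa [Function.comp_def, Finset.sum_range_succ] using h
  set V := S.linealitySpace with hV
  have hVS {v : E} (hv : v ∈ V) : v ∈ S := by simpa using hv 1
  by_contra hne
  have hVtop : V ≠ ⊤ := by
    intro h
    refine hne (Set.eq_univ_of_forall fun v => hVS ?_)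
    rw [h]
    trivial
  obtain ⟨e, heV, he0⟩ := Submodule.exists_mem_ne_zero_of_ne_bot
    (mt Submodule.orthogonal_eq_bot_iff.1 hVtop)
  set P : E →L[ℝ] E := Vᗮ.starProjection with hPdef
  have hPe : P e = e := Submodule.starProjection_eq_self_iff.2 heV
  have hPV (v : E) : P v - v ∈ V := by
    have h := Vᗮ.sub_starProjection_mem_orthogonal v
    rw [Submodule.orthogonal_orthogonal] at h
    rw [← neg_sub]
    exact V.neg_mem h
  obtain ⟨w, hwV, hw0, hw⟩ := S.exists_line_of_short_vectors hSc Vᗮ fun r hr => by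
    choose G hG hGr using fun N => exists_late_sum_norm_mem_Icc hx0 hd P
      Vᗮ.norm_starProjection_apply_le (hPe.symm ▸ he0) (half_pos hr) N
    have : ProperSpace E := FiniteDimensional.proper ℝ E
    obtain ⟨u, -, φ, hφ, hlim⟩ := (isCompact_closedBall (0 : E) r).tendsto_subseq
      (x := fun N => P (∑ n ∈ G N, x n)) (fun N => by
        rw [mem_closedBall_zero_iff]
        linarith [(hGr N).2])
    have hnorm : ‖u‖ ∈ Set.Icc (r / 2) (2 * (r / 2)) :=
      isClosed_Icc.mem_of_tendsto hlim.norm (Eventually.of_forall fun j => hGr (φ j))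
    refine ⟨u, ?_, ?_, ?_, ?_⟩
    · exact mem_tailLimits_of_tendsto (G := fun j => G (φ j)) (fun v => hVS (hPV v))
        (fun j n hn => (hφ.id_le j).trans (hG _ n hn)) hlim
    · exact Vᗮ.closed_of_finiteDimensional.mem_of_tendsto hlim
        (Eventually.of_forall fun j => Vᗮ.starProjection_apply_mem _)
    · rintro rfl
      have := hnorm.1
      rw [norm_zero] at this
      linarith
    · linarith [hnorm.2]
  exact hw0 (inner_self_eq_zero.1 (Submodule.inner_right_of_mem_orthogonal hw hwV))

theorem summable_subseries {E : Type*} [NormedAddCommGroup E] [CompleteSpace E] {y : ℕ → E}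
    (hy : Summable fun n => ‖y n‖) (ε : ℕ → Bool) : Summable fun n => if ε n then y n else 0 :=
  Summable.of_norm_bounded hy fun n => by by_cases h : ε n <;> simp [h]

theorem isClosed_achv_of_summable_norm {E : Type*} [NormedAddCommGroup E] [CompleteSpace E]
    {y : ℕ → E} (hy : Summable fun n => ‖y n‖) : IsClosed (achv y) := by
  have hrange : achv y = Set.range fun ε : ℕ → Bool => ∑' n, if ε n then y n else 0 := by
    ext s
    refine exists_congr fun ε => ⟨fun h => ?_, ?_⟩
    · exact tendsto_nhds_unique (summable_subseries hy ε).hasSum.tendsto_sum_nat h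
    · rintro rfl
      exact (summable_subseries hy ε).hasSum.tendsto_sum_nat
  rw [hrange]
  refine (isCompact_range (continuous_tsum (fun n => ?_) hy fun n ε => ?_)).isClosed
  · exact (continuous_of_discreteTopology (f := fun b : Bool => if b then y n else 0)).comp
      (continuous_apply n)
  · by_cases h : ε n <;> simp [h]

theorem sum_mem_achv {E : Type*} [AddCommMonoid E] [TopologicalSpace E] (z : ℕ → E)
    (G : Finset ℕ) : ∑ n ∈ G, z n ∈ achv z := by
  refine ⟨fun n => decide (n ∈ G), tendsto_const_nhds.congr' ?_⟩
  filter_upwards [eventually_ge_atTop (G.sup id + 1)] with N hN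
  simp only [decide_eq_true_eq]
  rw [← Finset.sum_filter]
  congr 1
  ext n
  simp only [Finset.mem_filter, Finset.mem_range]
  refine ⟨fun hn => ⟨?_, hn⟩, fun hn => hn.2⟩
  have : n ≤ G.sup id := Finset.le_sup (f := id) hn
  omega

theorem mem_closure_achv_prod {E F : Type*} [NormedAddCommGroup E] [NormedAddCommGroup F]
    {x : ℕ → E} {y : ℕ → F} (hx : tailLimits x = Set.univ)
    (hy : Summable fun n => ‖y n‖) (a : E) {t : F} (ht : t ∈ achv y) :
    (a, t) ∈ closure (achv fun n => (x n, y n)) := by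
  obtain ⟨ε, hε⟩ := ht
  rw [Metric.mem_closure_iff]
  intro δ hδ
  obtain ⟨s, hs⟩ := summable_iff_vanishing_norm.1 hy (δ / 2) (half_pos hδ)
  obtain ⟨N, hN, hsN⟩ := ((Metric.tendsto_nhds.1 hε (δ / 2) (half_pos hδ)).and
    (eventually_ge_atTop (s.sup id + 1))).exists
  set H := (Finset.range N).filter fun n => ε n with hH
  have hmem : a - ∑ n ∈ H, x n ∈ tailLimits x := hx ▸ Set.mem_univ _
  obtain ⟨G, hGN, hG⟩ := hmem δ hδ N
  have hdisj : Disjoint H G := by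
    rw [Finset.disjoint_left]
    intro n hnH hnG
    have h₁ := Finset.mem_range.1 (Finset.mem_filter.1 hnH).1
    have h₂ := hGN n hnG
    omega
  have hGs : Disjoint G s := by
    rw [Finset.disjoint_left]
    intro n hnG hns
    have h₁ : n ≤ s.sup id := Finset.le_sup (f := id) hns
    have h₂ := hGN n hnG
    omega
  refine ⟨_, sum_mem_achv _ (H ∪ G), ?_⟩
  rw [Prod.dist_eq, max_lt_iff, Prod.fst_sum, Prod.snd_sum, dist_comm, dist_eq_norm,
    dist_comm, dist_eq_norm, Finset.sum_union hdisj, Finset.sum_union hdisj]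
  constructor
  · rwa [sub_sub_eq_add_sub, add_comm] at hG
  · rw [← Finset.sum_filter, dist_eq_norm] at hN
    have h₁ := (Real.norm_eq_abs _ ▸ le_abs_self (∑ n ∈ G, ‖y n‖)).trans_lt (hs G hGs)
    rw [add_sub_right_comm]
    linarith [norm_add_le (∑ n ∈ H, y n - t) (∑ n ∈ G, y n), norm_sum_le G y]

end AchievementSet

/-- If `∑ x_n` is conditionally convergent in `ℝ^k` with `A(x)` dense in `ℝ^k`
and `∑ y_n` is absolutely convergent in `ℝ^m`, then the closure of the achievement set of the
sequence of pairs `(x_n, y_n)` equals `ℝ^k × A(y)`. -/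
theorem stmt_15 (k m : ℕ) (x : ℕ → EuclideanSpace ℝ (Fin k))
    (y : ℕ → EuclideanSpace ℝ (Fin m))
    (hconv : ∃ s, Tendsto (fun N => ∑ n ∈ Finset.range N, x n) atTop (𝓝 s))
    (hnabs : ¬ Summable fun n => ‖x n‖)
    (hd : Dense (achv x))
    (hy : Summable fun n => ‖y n‖) :
    closure (achv (fun n => (x n, y n))) = Set.univ ×ˢ achv y := by
  refine Set.Subset.antisymm (closure_minimal ?_ ?_) ?_
  · rintro ⟨a, t⟩ ⟨ε, hε⟩
    refine ⟨trivial, ε, ?_⟩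
    convert (continuous_snd.tendsto _).comp hε using 2 with N
    simp only [Function.comp_apply, Prod.snd_sum]
    exact Finset.sum_congr rfl fun n _ => by by_cases h : ε n <;> simp [h]
  · exact isClosed_univ.prod (isClosed_achv_of_summable_norm hy)
  · rintro ⟨a, t⟩ ⟨-, ht⟩
    obtain ⟨s, hs⟩ := hconv
    exact mem_closure_achv_prod (tailLimits_eq_univ hs.cauchySeq hd) hy a ht
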